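/- arXiv:2402.03588 — 4 statements merged into one kernel-verified Lean document; each statement's English description precedes it below -/
import Mathlib

section
/- Let X be a set, 𝒞 a finite set of classes with at least two elements, ρ > 0, and let F be a nonempty class of scoring functions f : X × 𝒞 → ℝ. Fix f₀ ∈ F and assume that for every f ∈ F the function f − f₀ also lies in F. Let S and T be probability distributions on X × 𝒞 (with all quantities below measurable and integrable). Define d^{(ρ)}_{f,f₀,F}(S,T) = sup_{f'∈F} ( E_{x∼T_X}[Φ^ρ(ρ_{f'+f₀}(x, h_f(x)))] − E_{x∼S_X}[Φ^ρ(ρ_{f'+f₀}(x, h_f(x)))] ), where S_X, T_X are the marginals on X, and λ = min_{f*∈F} ( err_S^{(ρ)}(f*) + err_T^{(ρ)}(f*) ) (assumed attained or taken as infimum). Then for every f ∈ F: err_T(f) ≤ err_S^{(ρ)}(f) + d^{(ρ)}_{f,f₀,F}(S,T) + λ. -/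
/-!
For `g ∈ F` and the classifier `h` of `f`, the ramp loss obeys two triangle inequalities: wherever
`h x ≠ y`, one of `h x`, `y` has nonpositive margin under `g`, so
`err_T(h) ≤ disp_T(g, h) + err_T(g)`; and wherever `h x ≠ y`, the margin of `f` at `y` is
nonpositive, so `disp_S(g, h) ≤ err_S(f) + err_S(g)`. The difference `disp_T(g, h) - disp_S(g, h)`
is one of the values in the supremum defining the discrepancy, namely the one indexed by `g - f₀`.
-/

open MeasureTheory Real

/-- Ramp function `Φ^ρ`. -/
noncomputable def ramp (ρ t : ℝ) : ℝ := if t < 0 then 1 else if t ≤ ρ then 1 - t / ρ else 0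

/-- Margin `ρ_f(x,c) = f(x,c) − max_{c'≠c} f(x,c')`. -/
noncomputable def margin {X C : Type*} [Fintype C] [DecidableEq C] [Nontrivial C]
    (f : X × C → ℝ) (x : X) (c : C) : ℝ :=
  f (x, c) - (Finset.univ.erase c).sup'
    (by obtain ⟨b, hb⟩ := exists_ne c
        exact ⟨b, Finset.mem_erase.2 ⟨hb, Finset.mem_univ b⟩⟩)
    (fun c' => f (x, c'))

lemma ramp_nonneg (ρ t : ℝ) : 0 ≤ ramp ρ t := by
  unfold ramp
  split_ifs with ht htρ
  · exact zero_le_one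
  · exact sub_nonneg.2 (div_le_one_of_le₀ htρ ((not_lt.1 ht).trans htρ))
  · exact le_rfl

lemma ramp_le_one (ρ t : ℝ) : ramp ρ t ≤ 1 := by
  unfold ramp
  split_ifs with ht htρ
  · exact le_rfl
  · exact sub_le_self 1 (div_nonneg (not_lt.1 ht) ((not_lt.1 ht).trans htρ))
  · exact zero_le_one

lemma ramp_of_nonpos {ρ t : ℝ} (hρ : 0 ≤ ρ) (ht : t ≤ 0) : ramp ρ t = 1 := by
  rcases ht.lt_or_eq with hlt | rfl
  · simp [ramp, hlt]
  · simp [ramp, hρ]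

section Margin

variable {X C : Type*} [Fintype C] [DecidableEq C] [Nontrivial C]

lemma margin_nonpos_of_le {f : X × C → ℝ} {x : X} {c c' : C} (hne : c' ≠ c)
    (hle : f (x, c) ≤ f (x, c')) : margin f x c ≤ 0 :=
  sub_nonpos.2 <| hle.trans <|
    Finset.le_sup' (fun b => f (x, b)) (Finset.mem_erase.2 ⟨hne, Finset.mem_univ c'⟩)

lemma ramp_margin_le_add {ρ : ℝ} (hρ : 0 ≤ ρ) {f : X × C → ℝ} (g : X × C → ℝ) {x : X} {c y : C}
    (hle : f (x, y) ≤ f (x, c)) :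
    ramp ρ (margin g x c) ≤ ramp ρ (margin f x y) + ramp ρ (margin g x y) := by
  by_cases hcy : c = y
  · rw [hcy]
    exact le_add_of_nonneg_left (ramp_nonneg _ _)
  · rw [ramp_of_nonpos hρ (margin_nonpos_of_le hcy hle)]
    exact (ramp_le_one _ _).trans (le_add_of_nonneg_right (ramp_nonneg _ _))

lemma one_le_ramp_margin_add {ρ : ℝ} (hρ : 0 ≤ ρ) (g : X × C → ℝ) (x : X) {c c' : C}
    (hne : c ≠ c') : 1 ≤ ramp ρ (margin g x c) + ramp ρ (margin g x c') := by
  rcases le_total (g (x, c)) (g (x, c')) with hle | hle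
  · rw [ramp_of_nonpos hρ (margin_nonpos_of_le hne.symm hle)]
    exact le_add_of_nonneg_right (ramp_nonneg _ _)
  · rw [ramp_of_nonpos hρ (margin_nonpos_of_le hne hle)]
    exact le_add_of_nonneg_left (ramp_nonneg _ _)

variable [MeasurableSpace X]

/-- The margin disparity `disp_ν^{(ρ)}(g, h)` of a scoring function `g` from a classifier `h`. The
second argument is the classifier itself rather than a scoring function inducing it. -/
noncomputable def marginDisp (ρ : ℝ) (ν : Measure X) (g : X × C → ℝ) (h : X → C) : ℝ :=
  ∫ x, ramp ρ (margin g x (h x)) ∂ν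

lemma marginDisp_nonneg (ρ : ℝ) (ν : Measure X) (g : X × C → ℝ) (h : X → C) :
    0 ≤ marginDisp ρ ν g h :=
  integral_nonneg fun _ => ramp_nonneg _ _

lemma marginDisp_le_measureReal_univ (ρ : ℝ) (ν : Measure X) [IsFiniteMeasure ν]
    (g : X × C → ℝ) (h : X → C) : marginDisp ρ ν g h ≤ ν.real Set.univ :=
  calc marginDisp ρ ν g h
    _ ≤ ∫ _, (1 : ℝ) ∂ν :=
      integral_mono_of_nonneg (.of_forall fun _ => ramp_nonneg _ _) (integrable_const 1)
        (.of_forall fun _ => ramp_le_one _ _)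
    _ = ν.real Set.univ := by simp

variable [MeasurableSpace C]

/-- The margin error `err_μ^{(ρ)}(f)`: the expected ramp loss of the margin at the true label. -/
noncomputable def marginErr (ρ : ℝ) (μ : Measure (X × C)) (f : X × C → ℝ) : ℝ :=
  ∫ p, ramp ρ (margin f p.1 p.2) ∂μ

/-- The margin discrepancy `d^{(ρ)}_{f,f₀,F}(S,T)`, where `h` is the classifier induced by `f`. -/
noncomputable def marginDiscrepancy (ρ : ℝ) (S T : Measure (X × C)) (F : Set (X × C → ℝ))
    (f₀ : X × C → ℝ) (h : X → C) : ℝ :=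
  sSup {v : ℝ | ∃ f' ∈ F, v =
    marginDisp ρ (T.map Prod.fst) (f' + f₀) h - marginDisp ρ (S.map Prod.fst) (f' + f₀) h}

/-- The ideal joint margin error `λ` of the class `F`, taken as an infimum. -/
noncomputable def idealMarginErr (ρ : ℝ) (S T : Measure (X × C)) (F : Set (X × C → ℝ)) : ℝ :=
  sInf {v : ℝ | ∃ g ∈ F, v = marginErr ρ S g + marginErr ρ T g}

variable {ρ : ℝ} {μ S T : Measure (X × C)} {F : Set (X × C → ℝ)} {f f₀ g : X × C → ℝ} {h : X → C}

lemma marginDisp_map_fst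
    (hdisp : AEStronglyMeasurable (fun x => ramp ρ (margin g x (h x))) (μ.map Prod.fst)) :
    marginDisp ρ (μ.map Prod.fst) g h = ∫ p, ramp ρ (margin g p.1 (h p.1)) ∂μ :=
  integral_map measurable_fst.aemeasurable hdisp

lemma marginDisp_map_fst_le_marginErr_add (hρ : 0 ≤ ρ) (hmax : ∀ x c, f (x, c) ≤ f (x, h x))
    (hdisp : AEStronglyMeasurable (fun x => ramp ρ (margin g x (h x))) (μ.map Prod.fst))
    (hf : Integrable (fun p => ramp ρ (margin f p.1 p.2)) μ)
    (hg : Integrable (fun p => ramp ρ (margin g p.1 p.2)) μ) :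
    marginDisp ρ (μ.map Prod.fst) g h ≤ marginErr ρ μ f + marginErr ρ μ g :=
  calc marginDisp ρ (μ.map Prod.fst) g h
    _ = ∫ p, ramp ρ (margin g p.1 (h p.1)) ∂μ := marginDisp_map_fst hdisp
    _ ≤ ∫ p, (ramp ρ (margin f p.1 p.2) + ramp ρ (margin g p.1 p.2)) ∂μ :=
      integral_mono_of_nonneg (.of_forall fun _ => ramp_nonneg _ _) (hf.add hg)
        (.of_forall fun p => ramp_margin_le_add hρ g (hmax p.1 p.2))
    _ = marginErr ρ μ f + marginErr ρ μ g := integral_add hf hg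

lemma measureReal_ne_le_marginDisp_add_marginErr (hρ : 0 ≤ ρ)
    (hdisp : Integrable (fun x => ramp ρ (margin g x (h x))) (μ.map Prod.fst))
    (hg : Integrable (fun p => ramp ρ (margin g p.1 p.2)) μ) :
    μ.real {p | h p.1 ≠ p.2} ≤ marginDisp ρ (μ.map Prod.fst) g h + marginErr ρ μ g := by
  let loss : X × C → ℝ := fun p => ramp ρ (margin g p.1 (h p.1)) + ramp ρ (margin g p.1 p.2)
  have hdisp' : Integrable (fun p => ramp ρ (margin g p.1 (h p.1))) μ :=
    hdisp.comp_measurable measurable_fst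
  have hloss : Integrable loss μ := hdisp'.add hg
  have hloss_nonneg : 0 ≤ loss := fun _ => add_nonneg (ramp_nonneg _ _) (ramp_nonneg _ _)
  have hsubset : {p : X × C | h p.1 ≠ p.2} ⊆ {p | 1 ≤ loss p} :=
    fun p hp => one_le_ramp_margin_add hρ g p.1 hp
  calc μ.real {p | h p.1 ≠ p.2}
    _ ≤ μ.real {p | 1 ≤ loss p} :=
      measureReal_mono hsubset (hloss.measure_ge_lt_top one_pos).ne
    _ ≤ ∫ p, loss p ∂μ := by
      simpa using mul_meas_ge_le_integral_of_nonneg (.of_forall hloss_nonneg) hloss 1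
    _ = marginDisp ρ (μ.map Prod.fst) g h + marginErr ρ μ g := by
      rw [marginDisp_map_fst hdisp.aestronglyMeasurable]
      exact integral_add hdisp' hg

lemma marginDisp_sub_le_marginDiscrepancy [IsFiniteMeasure T] (hg : g - f₀ ∈ F) :
    marginDisp ρ (T.map Prod.fst) g h - marginDisp ρ (S.map Prod.fst) g h
      ≤ marginDiscrepancy ρ S T F f₀ h := by
  refine le_csSup ⟨(T.map Prod.fst).real Set.univ, ?_⟩ ⟨g - f₀, hg, by rw [sub_add_cancel]⟩
  rintro v ⟨f', -, rfl⟩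
  exact (sub_le_self _ (marginDisp_nonneg _ _ _ _)).trans (marginDisp_le_measureReal_univ _ _ _ _)

theorem stmt0_general [IsFiniteMeasure T] (hρ : 0 < ρ) (hF : F.Nonempty)
    (hclosed : ∀ g ∈ F, g - f₀ ∈ F) (hmax : ∀ x c, f (x, c) ≤ f (x, h x))
    (hdispS : ∀ f' ∈ F,
      Integrable (fun x => ramp ρ (margin (f' + f₀) x (h x))) (S.map Prod.fst))
    (hdispT : ∀ f' ∈ F,
      Integrable (fun x => ramp ρ (margin (f' + f₀) x (h x))) (T.map Prod.fst))
    (hf : Integrable (fun p => ramp ρ (margin f p.1 p.2)) S)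
    (herrS : ∀ g ∈ F, Integrable (fun p => ramp ρ (margin g p.1 p.2)) S)
    (herrT : ∀ g ∈ F, Integrable (fun p => ramp ρ (margin g p.1 p.2)) T) :
    T.real {p | h p.1 ≠ p.2} ≤
      marginErr ρ S f + marginDiscrepancy ρ S T F f₀ h + idealMarginErr ρ S T F := by
  rw [← sub_le_iff_le_add']
  obtain ⟨g₀, hg₀⟩ := hF
  refine le_csInf ⟨_, g₀, hg₀, rfl⟩ ?_
  rintro v ⟨g, hg, rfl⟩
  have hgS := hdispS _ (hclosed g hg)
  have hgT := hdispT _ (hclosed g hg)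
  rw [sub_add_cancel] at hgS hgT
  have htarget : T.real {p | h p.1 ≠ p.2} ≤ marginDisp ρ (T.map Prod.fst) g h + marginErr ρ T g :=
    measureReal_ne_le_marginDisp_add_marginErr hρ.le hgT (herrT g hg)
  have hsource : marginDisp ρ (S.map Prod.fst) g h ≤ marginErr ρ S f + marginErr ρ S g :=
    marginDisp_map_fst_le_marginErr_add hρ.le hmax hgS.aestronglyMeasurable hf (herrS g hg)
  have hshift : marginDisp ρ (T.map Prod.fst) g h - marginDisp ρ (S.map Prod.fst) g h
      ≤ marginDiscrepancy ρ S T F f₀ h :=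
    marginDisp_sub_le_marginDiscrepancy (hclosed g hg)
  linarith

end Margin

/-- the margin-disparity generalization bound
`err_T(f) ≤ err_S^{(ρ)}(f) + d^{(ρ)}_{f,f₀,F}(S,T) + λ` for every `f ∈ F`,
where `am` is the fixed argmax tie-breaking rule inducing the classifier `h_f = am f`. -/
theorem stmt0 {X C : Type*} [MeasurableSpace X] [MeasurableSpace C]
    [Fintype C] [DecidableEq C] [Nontrivial C]
    (ρ : ℝ) (hρ : 0 < ρ)
    (F : Set (X × C → ℝ)) (hF : F.Nonempty)
    (f₀ : X × C → ℝ) (hf₀ : f₀ ∈ F)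
    (hclosed : ∀ f ∈ F, (f - f₀) ∈ F)
    -- the classifier `h_f = am f` given by an argmax with a fixed tie-breaking rule
    (am : (X × C → ℝ) → X → C)
    (ham : ∀ g : X × C → ℝ, ∀ x : X, ∀ c : C, g (x, c) ≤ g (x, am g x))
    (S T : Measure (X × C)) [IsProbabilityMeasure S] [IsProbabilityMeasure T]
    -- all quantities below are measurable and integrable
    (hdispS : ∀ f ∈ F, ∀ f' ∈ F,
      Integrable (fun x => ramp ρ (margin (f' + f₀) x (am f x))) (S.map Prod.fst))
    (hdispT : ∀ f ∈ F, ∀ f' ∈ F,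
      Integrable (fun x => ramp ρ (margin (f' + f₀) x (am f x))) (T.map Prod.fst))
    (herrS : ∀ f ∈ F, Integrable (fun p => ramp ρ (margin f p.1 p.2)) S)
    (herrT : ∀ f ∈ F, Integrable (fun p => ramp ρ (margin f p.1 p.2)) T) :
    ∀ f ∈ F,
      (T {p : X × C | am f p.1 ≠ p.2}).toReal ≤
        (∫ p, ramp ρ (margin f p.1 p.2) ∂S)
        + sSup {v : ℝ | ∃ f' ∈ F, v =
            (∫ x, ramp ρ (margin (f' + f₀) x (am f x)) ∂(T.map Prod.fst))
            - ∫ x, ramp ρ (margin (f' + f₀) x (am f x)) ∂(S.map Prod.fst)}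
        + sInf {v : ℝ | ∃ g ∈ F, v =
            (∫ p, ramp ρ (margin g p.1 p.2) ∂S) + ∫ p, ramp ρ (margin g p.1 p.2) ∂T} :=
  fun f hf => stmt0_general hρ hF hclosed (ham f) (hdispS f hf) (hdispT f hf) (herrS f hf)
    herrS herrT
end

section
/- (Talagrand's contraction lemma) Let X be a set, x₁, …, x_n points of X, G a family of functions X → ℝ, and for each i ∈ {1,…,n} let Ψ_i : ℝ → ℝ be l-Lipschitz for a common constant l ≥ 0. Then E_δ[ sup_{g∈G} (1/n) Σ_{i=1}^n δ_i (Ψ_i ∘ g)(x_i) ] ≤ l · E_δ[ sup_{g∈G} (1/n) Σ_{i=1}^n δ_i g(x_i) ], where δ₁,…,δ_n are i.i.d. uniform random variables taking values in {−1,+1} and both suprema are assumed finite. -/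
open Real

/-!
Replace the contracted coordinates one at a time. Conditioning on all signs but the `i`-th, the two
values of that sign contribute `sup (d + f) + sup (d - f)`, where `d` collects the other
coordinates. For points `s` and `t`, a contraction `f'` of `f` satisfies
`(d s + f' s) + (d t - f' t) ≤ d s + d t + |f s - f t|`, and the right-hand side is
`(d s + f s) + (d t - f t)` or the same expression with `s` and `t` exchanged. Hence passing from
`f` to `f'` does not increase the sum of the two suprema. The same inequality with `t` fixed shows
that the suprema stay finite.
-/

open Finset Function
open scoped BigOperators

theorem update_piecewise_eq_self_of_notMem {ι : Type*} [DecidableEq ι] {E : ι → Type*}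
    {S : Finset ι} {i : ι} (hi : i ∉ S) (f g : ∀ i, E i) :
    update (S.piecewise f g) i (g i) = S.piecewise f g := by
  rw [update_eq_self_iff, piecewise_eq_of_notMem _ _ _ hi]

section TwoSuprema

variable {T : Type*} {d f f' : T → ℝ}

theorem add_add_sub_le_iSup_add_iSup (hf : ∀ s t, |f' s - f' t| ≤ |f s - f t|)
    (hadd : BddAbove (Set.range fun t ↦ d t + f t))
    (hsub : BddAbove (Set.range fun t ↦ d t - f t)) (s t : T) :
    (d s + f' s) + (d t - f' t) ≤ (⨆ t, (d t + f t)) + ⨆ t, (d t - f t) := by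
  have contraction : f' s - f' t ≤ |f s - f t| := (le_abs_self _).trans (hf s t)
  rcases abs_cases (f s - f t) with ⟨habs, _⟩ | ⟨habs, _⟩
  · linarith [le_ciSup hadd s, le_ciSup hsub t]
  · linarith [le_ciSup hadd t, le_ciSup hsub s]

theorem bddAbove_range_add_of_abs_sub_le (hf : ∀ s t, |f' s - f' t| ≤ |f s - f t|)
    (hadd : BddAbove (Set.range fun t ↦ d t + f t))
    (hsub : BddAbove (Set.range fun t ↦ d t - f t)) :
    BddAbove (Set.range fun t ↦ d t + f' t) := by
  rcases isEmpty_or_nonempty T with _ | ⟨⟨t⟩⟩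
  · simp [Set.range_eq_empty]
  · refine ⟨(⨆ t, (d t + f t)) + (⨆ t, (d t - f t)) - (d t - f' t), ?_⟩
    rintro _ ⟨s, rfl⟩
    exact le_sub_iff_add_le.2 (add_add_sub_le_iSup_add_iSup hf hadd hsub s t)

theorem iSup_add_iSup_le_of_abs_sub_le [Nonempty T] (hf : ∀ s t, |f' s - f' t| ≤ |f s - f t|)
    (hadd : BddAbove (Set.range fun t ↦ d t + f t))
    (hsub : BddAbove (Set.range fun t ↦ d t - f t)) :
    (⨆ t, (d t + f' t)) + (⨆ t, (d t - f' t)) ≤ (⨆ t, (d t + f t)) + ⨆ t, (d t - f t) := by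
  refine le_sub_iff_add_le.1 (ciSup_le fun s ↦ le_sub_comm.1 (ciSup_le fun t ↦ ?_))
  exact le_sub_iff_add_le'.2 (add_add_sub_le_iSup_add_iSup hf hadd hsub s t)

end TwoSuprema

/-- The value `±1` of a Rademacher variable, with outcomes encoded as Booleans. -/
def rademacherSign (b : Bool) : ℝ := if b then 1 else -1

theorem rademacherSign_not (b : Bool) : rademacherSign (!b) = -rademacherSign b := by
  cases b <;> simp [rademacherSign]

theorem abs_rademacherSign (b : Bool) : |rademacherSign b| = 1 := by
  cases b <;> simp [rademacherSign]

/-- The involution of sign vectors that reverses the `i`-th sign; it pairs the two sign vectors that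
agree away from `i`. -/
def flipSign {ι : Type*} [DecidableEq ι] (i : ι) (σ : ι → Bool) : ι → Bool := update σ i (!σ i)

theorem flipSign_involutive {ι : Type*} [DecidableEq ι] (i : ι) :
    Involutive (flipSign i) := fun σ ↦ by
  simp [flipSign]

section RademacherWidth

variable {ι T : Type*} [Fintype ι]

/-- The Rademacher sum `∑ i, δ i * a i t` of the vector `(a i t)ᵢ`. The family is stored as
`a : ι → T → ℝ`, coordinate first, so that one coordinate can be replaced by `Function.update`. -/
def signedSum (σ : ι → Bool) (a : ι → T → ℝ) (t : T) : ℝ :=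
  ∑ i, rademacherSign (σ i) * a i t

theorem signedSum_const_mul (c : ℝ) (σ : ι → Bool) (a : ι → T → ℝ) (t : T) :
    signedSum σ (fun i t ↦ c * a i t) t = c * signedSum σ a t := by
  simp only [signedSum, mul_sum, mul_left_comm]

variable [DecidableEq ι]

theorem signedSum_update (σ : ι → Bool) (a : ι → T → ℝ) (i : ι) (f : T → ℝ) (t : T) :
    signedSum σ (update a i f) t =
      ∑ j ∈ univ.erase i, rademacherSign (σ j) * a j t + rademacherSign (σ i) * f t := by
  rw [signedSum, ← sum_erase_add univ _ (mem_univ i), update_self]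
  congr 1
  exact sum_congr rfl fun j hj ↦ by rw [update_of_ne (ne_of_mem_erase hj)]

theorem signedSum_flipSign_update (σ : ι → Bool) (a : ι → T → ℝ) (i : ι) (f : T → ℝ) (t : T) :
    signedSum (flipSign i σ) (update a i f) t =
      ∑ j ∈ univ.erase i, rademacherSign (σ j) * a j t - rademacherSign (σ i) * f t := by
  rw [signedSum_update, flipSign, update_self, rademacherSign_not, neg_mul, ← sub_eq_add_neg]
  congr 1
  exact sum_congr rfl fun j hj ↦ by rw [update_of_ne (ne_of_mem_erase hj)]

/-- The Rademacher average `E_δ[sup_t ∑ i, δ i * a i t]`, the expectation being the mean over all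
sign vectors. The real supremum has the junk value `0` when it is not finite. -/
noncomputable def rademacherWidth (a : ι → T → ℝ) : ℝ :=
  𝔼 σ : ι → Bool, ⨆ t, signedSum σ a t

theorem rademacherWidth_const_mul {c : ℝ} (hc : 0 ≤ c) (a : ι → T → ℝ) :
    rademacherWidth (fun i t ↦ c * a i t) = c * rademacherWidth a := by
  simp only [rademacherWidth, signedSum_const_mul, ← Real.mul_iSup_of_nonneg hc, mul_expect]

theorem rademacherWidth_eq_expect_flipSign (a : ι → T → ℝ) (i : ι) :
    rademacherWidth a = 𝔼 σ, ⨆ t, signedSum (flipSign i σ) a t :=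
  (Fintype.expect_bijective _ (flipSign_involutive i).bijective _ _ fun _ ↦ rfl).symm

theorem abs_rademacherSign_mul_sub_le {f f' : T → ℝ} (hf : ∀ s t, |f' s - f' t| ≤ |f s - f t|)
    (b : Bool) (s t : T) :
    |rademacherSign b * f' s - rademacherSign b * f' t| ≤
      |rademacherSign b * f s - rademacherSign b * f t| := by
  simpa only [← mul_sub, abs_mul, abs_rademacherSign, one_mul] using hf s t

variable {a b : ι → T → ℝ} {i : ι} {f f' : T → ℝ}

theorem bddAbove_range_signedSum_update (hf : ∀ s t, |f' s - f' t| ≤ |f s - f t|)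
    (ha : ∀ σ, BddAbove (Set.range (signedSum σ (update a i f)))) (σ : ι → Bool) :
    BddAbove (Set.range (signedSum σ (update a i f'))) := by
  have hadd := ha σ
  have hsub := ha (flipSign i σ)
  simp only [funext (signedSum_update σ a i _), funext (signedSum_flipSign_update σ a i _)]
    at hadd hsub ⊢
  exact bddAbove_range_add_of_abs_sub_le (abs_rademacherSign_mul_sub_le hf (σ i)) hadd hsub

theorem rademacherWidth_update_le [Nonempty T] (hf : ∀ s t, |f' s - f' t| ≤ |f s - f t|)
    (ha : ∀ σ, BddAbove (Set.range (signedSum σ (update a i f)))) :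
    rademacherWidth (update a i f') ≤ rademacherWidth (update a i f) := by
  have sum_with_flip_le (σ : ι → Bool) :
      (⨆ t, signedSum σ (update a i f') t) + (⨆ t, signedSum (flipSign i σ) (update a i f') t) ≤
        (⨆ t, signedSum σ (update a i f) t) + ⨆ t, signedSum (flipSign i σ) (update a i f) t := by
    have hadd := ha σ
    have hsub := ha (flipSign i σ)
    simp only [funext (signedSum_update σ a i _), funext (signedSum_flipSign_update σ a i _)]
      at hadd hsub ⊢
    exact iSup_add_iSup_le_of_abs_sub_le (abs_rademacherSign_mul_sub_le hf (σ i)) hadd hsub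
  have two_mul_width (h : T → ℝ) :
      2 * rademacherWidth (update a i h) = 𝔼 σ, ((⨆ t, signedSum σ (update a i h) t) +
        ⨆ t, signedSum (flipSign i σ) (update a i h) t) := by
    rw [two_mul, expect_add_distrib, ← rademacherWidth_eq_expect_flipSign, ← rademacherWidth]
  refine le_of_mul_le_mul_left ?_ (zero_lt_two' ℝ)
  simpa only [two_mul_width] using expect_le_expect fun σ _ ↦ sum_with_flip_le σ

theorem bddAbove_range_signedSum_piecewise (hab : ∀ i s t, |b i s - b i t| ≤ |a i s - a i t|)
    (ha : ∀ σ, BddAbove (Set.range (signedSum σ a))) (S : Finset ι) :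
    ∀ σ, BddAbove (Set.range (signedSum σ (S.piecewise b a))) := by
  induction S using Finset.induction_on with
  | empty => simpa only [piecewise_empty] using ha
  | insert i S hi ih =>
    rw [← update_piecewise_eq_self_of_notMem hi] at ih
    rw [piecewise_insert]
    exact bddAbove_range_signedSum_update (hab i) ih

theorem rademacherWidth_piecewise_le [Nonempty T] (hab : ∀ i s t, |b i s - b i t| ≤ |a i s - a i t|)
    (ha : ∀ σ, BddAbove (Set.range (signedSum σ a))) (S : Finset ι) :
    rademacherWidth (S.piecewise b a) ≤ rademacherWidth a := by
  induction S using Finset.induction_on with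
  | empty => rw [piecewise_empty]
  | insert i S hi ih =>
    have hbdd := bddAbove_range_signedSum_piecewise hab ha S
    rw [← update_piecewise_eq_self_of_notMem hi] at hbdd ih
    rw [piecewise_insert]
    exact (rademacherWidth_update_le (hab i) hbdd).trans ih

theorem rademacherWidth_le_of_abs_sub_le [Nonempty T]
    (hab : ∀ i s t, |b i s - b i t| ≤ |a i s - a i t|)
    (ha : ∀ σ, BddAbove (Set.range (signedSum σ a))) :
    rademacherWidth b ≤ rademacherWidth a := by
  simpa only [piecewise_univ] using rademacherWidth_piecewise_le hab ha univ

theorem rademacherWidth_le_mul_of_abs_sub_le [Nonempty T] {l : ℝ} (hl : 0 ≤ l)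
    (hab : ∀ i s t, |b i s - b i t| ≤ l * |a i s - a i t|)
    (ha : ∀ σ, BddAbove (Set.range (signedSum σ a))) :
    rademacherWidth b ≤ l * rademacherWidth a := by
  rw [← rademacherWidth_const_mul hl]
  refine rademacherWidth_le_of_abs_sub_le (fun i s t ↦ ?_) fun σ ↦ ?_
  · simpa only [← mul_sub, abs_mul, abs_of_nonneg hl] using hab i s t
  · rw [funext (signedSum_const_mul l σ a)]
    exact (ha σ).range_comp_left (monotone_mul_left_of_nonneg hl)

theorem sum_sSup_image_div_eq_rademacherWidth {Y : Type*} (n : ℕ) (c : ℝ) (f : Fin n → Y → ℝ)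
    (G : Set Y) :
    (∑ σ : Fin n → Bool, sSup ((fun g ↦ c * ∑ i, (if σ i then (1 : ℝ) else -1) * f i g) '' G))
      / 2 ^ n = rademacherWidth fun i (g : G) ↦ c * f i g := by
  simp only [rademacherWidth, Fintype.expect_eq_sum_div_card, signedSum_const_mul, sSup_image']
  simp [signedSum, rademacherSign]

end RademacherWidth

/-- Talagrand's contraction lemma:
if each `Ψ_i : ℝ → ℝ` is `l`-Lipschitz, then
`E_δ[sup_{g∈G} (1/n) Σ δ_i (Ψ_i ∘ g)(x_i)] ≤ l · E_δ[sup_{g∈G} (1/n) Σ δ_i g(x_i)]`,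
where the expectation over the i.i.d. uniform signs `δ ∈ {−1,+1}ⁿ` is written as the
average over all `2ⁿ` sign vectors, and the suprema are assumed finite. -/
theorem stmt7 {X : Type*} (n : ℕ) (x : Fin n → X) (G : Set (X → ℝ)) (hG : G.Nonempty)
    (l : ℝ) (hl : 0 ≤ l) (Ψ : Fin n → ℝ → ℝ)
    (hΨ : ∀ i : Fin n, ∀ a b : ℝ, |Ψ i a - Ψ i b| ≤ l * |a - b|)
    (hbdd₁ : ∀ σ : Fin n → Bool, BddAbove
      ((fun g => (n : ℝ)⁻¹ * ∑ i, (if σ i then (1 : ℝ) else -1) * Ψ i (g (x i))) '' G))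
    (hbdd₂ : ∀ σ : Fin n → Bool, BddAbove
      ((fun g => (n : ℝ)⁻¹ * ∑ i, (if σ i then (1 : ℝ) else -1) * g (x i)) '' G)) :
    (∑ σ : Fin n → Bool,
        sSup ((fun g => (n : ℝ)⁻¹ * ∑ i, (if σ i then (1 : ℝ) else -1) * Ψ i (g (x i))) '' G))
      / 2 ^ n
    ≤ l * ((∑ σ : Fin n → Bool,
        sSup ((fun g => (n : ℝ)⁻¹ * ∑ i, (if σ i then (1 : ℝ) else -1) * g (x i)) '' G))
      / 2 ^ n) := by
  have : Nonempty G := hG.to_subtype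
  rw [sum_sSup_image_div_eq_rademacherWidth n _ (fun i (g : X → ℝ) ↦ Ψ i (g (x i))),
    sum_sSup_image_div_eq_rademacherWidth n _ (fun i (g : X → ℝ) ↦ g (x i))]
  refine rademacherWidth_le_mul_of_abs_sub_le hl (fun i g h ↦ ?_) fun σ ↦ ?_
  · rw [← mul_sub, ← mul_sub, abs_mul, abs_mul, mul_left_comm]
    exact mul_le_mul_of_nonneg_left (hΨ i _ _) (abs_nonneg _)
  · rw [funext (signedSum_const_mul _ σ _)]
    simpa only [signedSum, rademacherSign, Set.image_eq_range] using hbdd₂ σ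
end

section
/- Let a, ε ∈ ℝ with a ≥ ε > 0, and let 0 < λ⁻ ≤ λ⁺ ≤ 1. Define Γ : ℝ → ℝ by Γ(z) = log( e^{z+a} / (e^{z+a} + 1 − e^z) ). Then for every z with λ⁻ ≤ e^z ≤ λ⁺, the denominator satisfies e^{z+a} + 1 − e^z ≥ (e^ε − 1)·e^z + 1 > 0, Γ is differentiable at z with Γ'(z) = 1 / (e^{z+a} + 1 − e^z), and 0 < Γ'(z) ≤ 1 / ((e^ε − 1)·λ⁻ + 1). In particular, Γ is Lipschitz on the interval [log λ⁻, log λ⁺] with Lipschitz constant max{ 1/((e^ε − 1)λ⁻ + 1), 1/((e^ε − 1)λ⁺ + 1) }. -/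
open Real

/-!
The denominator `D(z) = e^{z+a} + 1 - e^z = (e^a - 1) e^z + 1` is an affine function of `e^z` whose
slope increases with `a`. It satisfies `D' = D - 1`, and `Γ(z) = z + a - log D(z)`, so
`Γ' = 1 - (D - 1) / D = 1 / D`. An affine function on an interval is smallest at an endpoint, which
bounds `1 / D`, and the mean value inequality turns this into the Lipschitz estimate.
-/

section AffineOnInterval

section Ring

variable {R : Type*} [Ring R] [LinearOrder R] [IsOrderedRing R] {b c l u x : R}

lemma min_mul_add_le_mul_add (hl : l ≤ x) (hu : x ≤ u) :
    min (c * l + b) (c * u + b) ≤ c * x + b := by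
  rcases le_total 0 c with hc | hc
  · exact min_le_of_left_le (by gcongr)
  · exact min_le_of_right_le (add_le_add (mul_le_mul_of_nonpos_left hu hc) le_rfl)

lemma mul_add_pos_of_mem_Icc (hl₀ : 0 < c * l + b) (hu₀ : 0 < c * u + b) (hx : x ∈ Set.Icc l u) :
    0 < c * x + b :=
  (lt_min hl₀ hu₀).trans_le (min_mul_add_le_mul_add hx.1 hx.2)

end Ring

section Field

variable {K : Type*} [Field K] [LinearOrder K] [IsStrictOrderedRing K] {b c l u x : K}

lemma one_div_mul_add_le_max (hl₀ : 0 < c * l + b) (hu₀ : 0 < c * u + b) (hx : x ∈ Set.Icc l u) :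
    1 / (c * x + b) ≤ max (1 / (c * l + b)) (1 / (c * u + b)) := by
  rcases min_le_iff.1 (min_mul_add_le_mul_add (b := b) (c := c) hx.1 hx.2) with h | h
  · exact le_max_of_le_left (one_div_le_one_div_of_le hl₀ h)
  · exact le_max_of_le_right (one_div_le_one_div_of_le hu₀ h)

lemma max_one_div_mul_add_eq_left (hc : 0 ≤ c) (hl₀ : 0 < c * l + b) (hlu : l ≤ u) :
    max (1 / (c * l + b)) (1 / (c * u + b)) = 1 / (c * l + b) :=
  max_eq_left (one_div_le_one_div_of_le hl₀ (by gcongr))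

end Field

end AffineOnInterval

/-- The transformation `Γ` of the source-domain discrepancy loss, with source-only margin `a`. It is
meaningful only where `exp (z + a) + 1 - exp z` is positive. -/
noncomputable def sourceTransform (a : ℝ) : ℝ → ℝ :=
  fun z => log (exp (z + a) / (exp (z + a) + 1 - exp z))

lemma exp_sub_one_mul_add_one_pos (ε : ℝ) {x : ℝ} (hx₀ : 0 ≤ x) (hx₁ : x ≤ 1) :
    0 < (exp ε - 1) * x + 1 :=
  mul_add_pos_of_mem_Icc (by simp) (by simp [exp_pos]) ⟨hx₀, hx₁⟩

lemma exp_add_add_one_sub_exp (a z : ℝ) :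
    exp (z + a) + 1 - exp z = (exp a - 1) * exp z + 1 := by
  rw [exp_add]
  ring

lemma mul_exp_add_one_le_exp_add_add_one_sub_exp {a ε : ℝ} (h : ε ≤ a) (z : ℝ) :
    (exp ε - 1) * exp z + 1 ≤ exp (z + a) + 1 - exp z := by
  rw [exp_add_add_one_sub_exp]
  gcongr

lemma hasDerivAt_sourceTransform {a z : ℝ} (h : exp (z + a) + 1 - exp z ≠ 0) :
    HasDerivAt (sourceTransform a) (1 / (exp (z + a) + 1 - exp z)) z := by
  have numerator : HasDerivAt (fun w => exp (w + a)) (exp (z + a)) z := by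
    simpa only [mul_one, id] using ((hasDerivAt_id z).add_const a).exp
  have denominator : HasDerivAt (fun w => exp (w + a) + 1 - exp w) (exp (z + a) - exp z) z :=
    (numerator.add_const 1).sub (hasDerivAt_exp z)
  refine ((numerator.fun_div denominator h).log
    (div_ne_zero (exp_ne_zero _) h)).congr_deriv ?_
  field_simp
  ring

lemma abs_sourceTransform_sub_le {a C : ℝ} {s : Set ℝ} (hs : Convex ℝ s)
    (hpos : ∀ z ∈ s, 0 < exp (z + a) + 1 - exp z)
    (hC : ∀ z ∈ s, 1 / (exp (z + a) + 1 - exp z) ≤ C) {x y : ℝ} (hx : x ∈ s) (hy : y ∈ s) :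
    |sourceTransform a x - sourceTransform a y| ≤ C * |x - y| := by
  have norm_deriv_le : ∀ z ∈ s, ‖1 / (exp (z + a) + 1 - exp z)‖ ≤ C := fun z hz => by
    rw [norm_of_nonneg (one_div_pos.2 (hpos z hz)).le]
    exact hC z hz
  exact hs.norm_image_sub_le_of_norm_hasDerivWithin_le
    (fun z hz => (hasDerivAt_sourceTransform (hpos z hz).ne').hasDerivWithinAt) norm_deriv_le hy hx

theorem stmt8_general {a ε lamm lamp : ℝ} (haε : ε ≤ a) (hlamm : 0 < lamm) (hlam : lamm ≤ lamp)
    (hlamp : 0 < (exp ε - 1) * lamp + 1) :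
    (∀ z : ℝ, lamm ≤ exp z → exp z ≤ lamp →
      ((exp ε - 1) * exp z + 1 ≤ exp (z + a) + 1 - exp z ∧
       0 < (exp ε - 1) * exp z + 1 ∧
       HasDerivAt (sourceTransform a) (1 / (exp (z + a) + 1 - exp z)) z ∧
       0 < 1 / (exp (z + a) + 1 - exp z) ∧
       1 / (exp (z + a) + 1 - exp z) ≤
        max (1 / ((exp ε - 1) * lamm + 1)) (1 / ((exp ε - 1) * lamp + 1)))) ∧
    (∀ z₁ ∈ Set.Icc (log lamm) (log lamp), ∀ z₂ ∈ Set.Icc (log lamm) (log lamp),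
      |sourceTransform a z₁ - sourceTransform a z₂| ≤
        max (1 / ((exp ε - 1) * lamm + 1)) (1 / ((exp ε - 1) * lamp + 1)) * |z₁ - z₂|) := by
  have lower_lamm_pos : 0 < (exp ε - 1) * lamm + 1 :=
    mul_add_pos_of_mem_Icc (l := 0) (by simp) hlamp ⟨hlamm.le, hlam⟩
  have lower_pos {z : ℝ} (hz : exp z ∈ Set.Icc lamm lamp) : 0 < (exp ε - 1) * exp z + 1 :=
    mul_add_pos_of_mem_Icc lower_lamm_pos hlamp hz
  have lower_le (z : ℝ) : (exp ε - 1) * exp z + 1 ≤ exp (z + a) + 1 - exp z :=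
    mul_exp_add_one_le_exp_add_add_one_sub_exp haε z
  have denom_pos {z : ℝ} (hz : exp z ∈ Set.Icc lamm lamp) : 0 < exp (z + a) + 1 - exp z :=
    (lower_pos hz).trans_le (lower_le z)
  have deriv_le {z : ℝ} (hz : exp z ∈ Set.Icc lamm lamp) : 1 / (exp (z + a) + 1 - exp z) ≤
      max (1 / ((exp ε - 1) * lamm + 1)) (1 / ((exp ε - 1) * lamp + 1)) :=
    (one_div_le_one_div_of_le (lower_pos hz) (lower_le z)).trans
      (one_div_mul_add_le_max lower_lamm_pos hlamp hz)
  have exp_mem {z : ℝ} (hz : z ∈ Set.Icc (log lamm) (log lamp)) : exp z ∈ Set.Icc lamm lamp :=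
    ⟨(log_le_iff_le_exp hlamm).1 hz.1, (le_log_iff_exp_le (hlamm.trans_le hlam)).1 hz.2⟩
  refine ⟨fun z hm hp => ?_, fun z₁ hz₁ z₂ hz₂ => ?_⟩
  · have hz : exp z ∈ Set.Icc lamm lamp := ⟨hm, hp⟩
    exact ⟨lower_le z, lower_pos hz, hasDerivAt_sourceTransform (denom_pos hz).ne',
      one_div_pos.2 (denom_pos hz), deriv_le hz⟩
  · exact abs_sourceTransform_sub_le (convex_Icc _ _) (fun z hz => denom_pos (exp_mem hz))
      (fun z hz => deriv_le (exp_mem hz)) hz₁ hz₂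

/-- properties of the source-side transformation
`Γ(z) = log( e^{z+a} / (e^{z+a} + 1 − e^z) )` for `a ≥ ε > 0` and `0 < λ⁻ ≤ λ⁺ ≤ 1`:
positivity of the denominator, the derivative formula, the derivative bounds, and the
resulting Lipschitz bound on `[log λ⁻, log λ⁺]`. -/
theorem stmt8 (a ε lamm lamp : ℝ) (hε : 0 < ε) (haε : ε ≤ a)
    (hlamm : 0 < lamm) (hlam : lamm ≤ lamp) (hlamp : lamp ≤ 1) :
    (∀ z : ℝ, lamm ≤ Real.exp z → Real.exp z ≤ lamp →
      ((Real.exp ε - 1) * Real.exp z + 1 ≤ Real.exp (z + a) + 1 - Real.exp z ∧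
       0 < (Real.exp ε - 1) * Real.exp z + 1 ∧
       HasDerivAt (fun w => Real.log (Real.exp (w + a) / (Real.exp (w + a) + 1 - Real.exp w)))
         (1 / (Real.exp (z + a) + 1 - Real.exp z)) z ∧
       0 < 1 / (Real.exp (z + a) + 1 - Real.exp z) ∧
       1 / (Real.exp (z + a) + 1 - Real.exp z) ≤ 1 / ((Real.exp ε - 1) * lamm + 1))) ∧
    (∀ z₁ ∈ Set.Icc (Real.log lamm) (Real.log lamp),
     ∀ z₂ ∈ Set.Icc (Real.log lamm) (Real.log lamp),
      |Real.log (Real.exp (z₁ + a) / (Real.exp (z₁ + a) + 1 - Real.exp z₁)) -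
        Real.log (Real.exp (z₂ + a) / (Real.exp (z₂ + a) + 1 - Real.exp z₂))| ≤
      max (1 / ((Real.exp ε - 1) * lamm + 1)) (1 / ((Real.exp ε - 1) * lamp + 1))
        * |z₁ - z₂|) := by
  have max_eq_left_endpoint := max_one_div_mul_add_eq_left (sub_nonneg.2 (one_le_exp hε.le))
    (exp_sub_one_mul_add_one_pos ε hlamm.le (hlam.trans hlamp)) hlam
  have general := stmt8_general haε hlamm hlam
    (exp_sub_one_mul_add_one_pos ε (hlamm.le.trans hlam) hlamp)
  simp only [max_eq_left_endpoint] at general ⊢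
  exact general
end

section
/- Let a, ε ∈ ℝ with a ≤ ε, and let 0 < λ⁻ ≤ λ⁺ ≤ 1. Define Ψ : ℝ → ℝ by Ψ(z) = −log( 1 + e^a (e^{−z} − 1) ) = z − log( e^z + e^a − e^{a+z} ). Then for every z with λ⁻ ≤ e^z ≤ λ⁺, one has e^a(1 − e^z) + e^z > 0, Ψ is differentiable at z with Ψ'(z) = e^a / ( e^a (1 − e^z) + e^z ), and 0 < Ψ'(z) ≤ max{ e^ε / ((1 − λ⁻) e^ε + λ⁻), e^ε / ((1 − λ⁺) e^ε + λ⁺) }. In particular, Ψ is Lipschitz on [log λ⁻, log λ⁺] with that constant. -/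
open Real

/-!
With `s = e^a` and `x = e^z`, the derivative of `Ψ` is `s / (s (1 - x) + x)`. The denominator is
affine in `s` and in `x` separately, so it is positive between two values of either variable at
which it is positive, and over an interval of `x` it is smallest at an endpoint. The quotient is
`1 / ((1 - x) + x / s)`, which increases with `s`, so `a` may be replaced by `ε`. The Lipschitz
bound is then the mean value inequality.
-/

section SlopeDenominator

variable {s t x y p q : ℝ}

theorem min_le_mul_one_sub_add (t : ℝ) (hx : x ∈ Set.Icc p q) :
    min (t * (1 - p) + p) (t * (1 - q) + q) ≤ t * (1 - x) + x := by
  have concave : ConcaveOn ℝ Set.univ fun y : ℝ => t * (1 - y) + y :=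
    ⟨convex_univ, fun u _ v _ b c _ _ hbc => by
      simp only [smul_eq_mul]
      linear_combination t * hbc⟩
  exact concave.min_le_of_mem_Icc (Set.mem_univ p) (Set.mem_univ q) hx

theorem mul_one_sub_add_pos_of_le_right (ht : 0 < t) (hx : 0 ≤ x) (hxy : x ≤ y)
    (hy : 0 < t * (1 - y) + y) : 0 < t * (1 - x) + x := by
  have at_zero : 0 < t * (1 - 0) + 0 := by simpa using ht
  exact (lt_min at_zero hy).trans_le (min_le_mul_one_sub_add t ⟨hx, hxy⟩)

theorem mul_one_sub_add_pos_of_le_left (hx : 0 ≤ x) (hs : 0 < s) (hst : s ≤ t)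
    (ht : 0 < t * (1 - x) + x) : 0 < s * (1 - x) + x := by
  have combination : t * (s * (1 - x) + x) = s * (t * (1 - x) + x) + (t - s) * x := by ring
  have scaled_pos : 0 < t * (s * (1 - x) + x) := by
    rw [combination]
    exact add_pos_of_pos_of_nonneg (mul_pos hs ht) (mul_nonneg (sub_nonneg.2 hst) hx)
  exact pos_of_mul_pos_right scaled_pos (hs.le.trans hst)

theorem div_mul_one_sub_add_le_div (hx : 0 ≤ x) (hs : 0 < s) (hst : s ≤ t)
    (ht : 0 < t * (1 - x) + x) : s / (s * (1 - x) + x) ≤ t / (t * (1 - x) + x) := by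
  rw [div_le_div_iff₀ (mul_one_sub_add_pos_of_le_left hx hs hst ht) ht]
  linear_combination x * hst

theorem div_mul_one_sub_add_le_max (ht : 0 < t) (hp : 0 ≤ p) (hx : x ∈ Set.Icc p q)
    (hq : 0 < t * (1 - q) + q) :
    t / (t * (1 - x) + x) ≤ max (t / (t * (1 - p) + p)) (t / (t * (1 - q) + q)) := by
  have p_pos : 0 < t * (1 - p) + p := mul_one_sub_add_pos_of_le_right ht hp (hx.1.trans hx.2) hq
  rcases min_le_iff.1 (min_le_mul_one_sub_add t hx) with p_le | q_le
  · exact le_max_of_le_left (div_le_div_of_nonneg_left ht.le p_pos p_le)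
  · exact le_max_of_le_right (div_le_div_of_nonneg_left ht.le hq q_le)

end SlopeDenominator

/-- The transformation `Ψ` with shift `a`: in the coordinate `z = -log (1 + e^ρ)`, it is the
translation `ρ ↦ ρ + a` of the margin. -/
noncomputable def marginShift (a z : ℝ) : ℝ :=
  -log (1 + exp a * (exp (-z) - 1))

theorem hasDerivAt_marginShift {a z : ℝ} (hz : exp a * (1 - exp z) + exp z ≠ 0) :
    HasDerivAt (marginShift a) (exp a / (exp a * (1 - exp z) + exp z)) z := by
  have arg_eq : 1 + exp a * (exp (-z) - 1) = (exp a * (1 - exp z) + exp z) / exp z := by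
    rw [exp_neg]
    field_simp
    ring
  have arg_ne_zero : 1 + exp a * (exp (-z) - 1) ≠ 0 := by
    rw [arg_eq]
    exact div_ne_zero hz (exp_ne_zero z)
  have arg_deriv : HasDerivAt (fun w => 1 + exp a * (exp (-w) - 1))
      (exp a * (exp (-z) * -1)) z :=
    (((hasDerivAt_neg z).exp.sub_const 1).const_mul (exp a)).const_add 1
  refine (arg_deriv.log arg_ne_zero).neg.congr_deriv ?_
  rw [arg_eq, exp_neg]
  field_simp

theorem abs_marginShift_sub_le {a K : ℝ} {S : Set ℝ} (hS : Convex ℝ S)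
    (hpos : ∀ z ∈ S, 0 < exp a * (1 - exp z) + exp z)
    (hK : ∀ z ∈ S, exp a / (exp a * (1 - exp z) + exp z) ≤ K)
    {z₁ z₂ : ℝ} (hz₁ : z₁ ∈ S) (hz₂ : z₂ ∈ S) :
    |marginShift a z₁ - marginShift a z₂| ≤ K * |z₁ - z₂| := by
  refine hS.norm_image_sub_le_of_norm_hasDerivWithin_le
    (fun z hz => (hasDerivAt_marginShift (hpos z hz).ne').hasDerivWithinAt) (fun z hz => ?_)
    hz₂ hz₁
  rw [norm_of_nonneg (div_pos (exp_pos a) (hpos z hz)).le]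
  exact hK z hz

theorem stmt9_general (a ε lamm lamp : ℝ) (haε : a ≤ ε) (hlamm : 0 < lamm) (hlam : lamm ≤ lamp)
    (hlamp : 0 < exp ε * (1 - lamp) + lamp) :
    (∀ z : ℝ, lamm ≤ exp z → exp z ≤ lamp →
      (0 < exp a * (1 - exp z) + exp z ∧
       HasDerivAt (marginShift a) (exp a / (exp a * (1 - exp z) + exp z)) z ∧
       0 < exp a / (exp a * (1 - exp z) + exp z) ∧
       exp a / (exp a * (1 - exp z) + exp z) ≤
         max (exp ε / (exp ε * (1 - lamm) + lamm)) (exp ε / (exp ε * (1 - lamp) + lamp)))) ∧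
    (∀ z₁ ∈ Set.Icc (log lamm) (log lamp), ∀ z₂ ∈ Set.Icc (log lamm) (log lamp),
      |marginShift a z₁ - marginShift a z₂| ≤
        max (exp ε / (exp ε * (1 - lamm) + lamm)) (exp ε / (exp ε * (1 - lamp) + lamp)) *
          |z₁ - z₂|) := by
  have exp_mem : ∀ z ∈ Set.Icc (log lamm) (log lamp), exp z ∈ Set.Icc lamm lamp := fun z hz =>
    ⟨(log_le_iff_le_exp hlamm).1 hz.1, (le_log_iff_exp_le (hlamm.trans_le hlam)).1 hz.2⟩
  have denom_pos_ε : ∀ z, exp z ≤ lamp → 0 < exp ε * (1 - exp z) + exp z := fun z hz =>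
    mul_one_sub_add_pos_of_le_right (exp_pos ε) (exp_pos z).le hz hlamp
  have denom_pos : ∀ z, exp z ≤ lamp → 0 < exp a * (1 - exp z) + exp z := fun z hz =>
    mul_one_sub_add_pos_of_le_left (exp_pos z).le (exp_pos a) (exp_le_exp.2 haε)
      (denom_pos_ε z hz)
  have slope_le : ∀ z, exp z ∈ Set.Icc lamm lamp → exp a / (exp a * (1 - exp z) + exp z) ≤
      max (exp ε / (exp ε * (1 - lamm) + lamm)) (exp ε / (exp ε * (1 - lamp) + lamp)) :=
    fun z hz =>
      (div_mul_one_sub_add_le_div (exp_pos z).le (exp_pos a) (exp_le_exp.2 haε)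
        (denom_pos_ε z hz.2)).trans
      (div_mul_one_sub_add_le_max (exp_pos ε) hlamm.le hz hlamp)
  refine ⟨fun z hm hp => ?_, fun z₁ hz₁ z₂ hz₂ => ?_⟩
  · have pos := denom_pos z hp
    exact ⟨pos, hasDerivAt_marginShift pos.ne', div_pos (exp_pos a) pos, slope_le z ⟨hm, hp⟩⟩
  · exact abs_marginShift_sub_le (convex_Icc _ _) (fun z hz => denom_pos z (exp_mem z hz).2)
      (fun z hz => slope_le z (exp_mem z hz)) hz₁ hz₂

/-- properties of the target-side transformation
`Ψ(z) = −log(1 + e^a (e^{−z} − 1))` for `a ≤ ε` and `0 < λ⁻ ≤ λ⁺ ≤ 1`: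
positivity of the denominator, the derivative formula, the derivative bounds, and the
resulting Lipschitz bound on `[log λ⁻, log λ⁺]`. -/
theorem stmt9 (a ε lamm lamp : ℝ) (haε : a ≤ ε)
    (hlamm : 0 < lamm) (hlam : lamm ≤ lamp) (hlamp : lamp ≤ 1) :
    (∀ z : ℝ, lamm ≤ Real.exp z → Real.exp z ≤ lamp →
      (0 < Real.exp a * (1 - Real.exp z) + Real.exp z ∧
       HasDerivAt (fun w => -Real.log (1 + Real.exp a * (Real.exp (-w) - 1)))
         (Real.exp a / (Real.exp a * (1 - Real.exp z) + Real.exp z)) z ∧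
       0 < Real.exp a / (Real.exp a * (1 - Real.exp z) + Real.exp z) ∧
       Real.exp a / (Real.exp a * (1 - Real.exp z) + Real.exp z) ≤
         max (Real.exp ε / ((1 - lamm) * Real.exp ε + lamm))
             (Real.exp ε / ((1 - lamp) * Real.exp ε + lamp)))) ∧
    (∀ z₁ ∈ Set.Icc (Real.log lamm) (Real.log lamp),
     ∀ z₂ ∈ Set.Icc (Real.log lamm) (Real.log lamp),
      |(-Real.log (1 + Real.exp a * (Real.exp (-z₁) - 1))) -
        (-Real.log (1 + Real.exp a * (Real.exp (-z₂) - 1)))| ≤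
      max (Real.exp ε / ((1 - lamm) * Real.exp ε + lamm))
          (Real.exp ε / ((1 - lamp) * Real.exp ε + lamp)) * |z₁ - z₂|) := by
  simp only [mul_comm (1 - _) (exp ε)]
  exact stmt9_general a ε lamm lamp haε hlamm hlam <| add_pos_of_nonneg_of_pos
    (mul_nonneg (exp_pos ε).le (sub_nonneg.2 hlamp)) (hlamm.trans_le hlam)
end
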